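/- arXiv:2310.07520 — 12 statements merged into one kernel-verified Lean document; each statement's English description precedes it below -/
import Mathlib

section
/- Let n be an odd positive integer that is not divisible by 3, and let G be a finite group of order 3n. Then G has a normal subgroup N of order n and a subgroup H of order 3 such that N ∩ H is trivial and N·H = G (equivalently, H is a complement of N, so G is an internal semidirect product N ⋊ H with H ≅ ℤ/3ℤ). -/
/-!
Since `n` is odd, `3` is the smallest prime factor of `|G| = 3n`, and since `3 ∤ n` a Sylow
`3`-subgroup `P` has order `3`, hence is cyclic. The quotient `N(P)/C(P)` embeds in `Aut P`, of
order `2`, so it is trivial because `|G|` is odd; Burnside's transfer theorem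
(`IsCyclic.isComplement'`) then makes the kernel of the transfer `G →* P` a normal complement
of `P`. This argument needs neither solvability of `G` nor the Schur–Zassenhaus theorem.
-/

/-- Let `n` be an odd positive integer not divisible by 3, and `G` a finite group of
order `3n`. Then `G` has a normal subgroup `N` of order `n` and a subgroup `H` of
order 3 which is a complement of `N` (so `N ⊓ H = ⊥` and `N * H = G`). -/
theorem odd_order_3n_splits (n : ℕ) (hn : 0 < n) (hodd : Odd n) (h3 : ¬ (3 ∣ n))
    (G : Type*) [Group G] [Finite G] (hcard : Nat.card G = 3 * n) :
    ∃ (N H : Subgroup G), N.Normal ∧ Nat.card N = n ∧ Nat.card H = 3 ∧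
      N.IsComplement' H := by
  have : Fact (Nat.Prime 3) := ⟨Nat.prime_three⟩
  obtain ⟨P⟩ : Nonempty (Sylow 3 G) := inferInstance
  have hP : Nat.card P = 3 := by
    rw [P.card_eq_multiplicity, hcard, Nat.factorization_mul (by norm_num) hn.ne']
    simp [Nat.prime_three.factorization_self, Nat.factorization_eq_zero_of_not_dvd h3]
  have hcyc : IsCyclic P := isCyclic_of_prime_card hP
  have hmin : (Nat.card G).minFac = 3 := by
    have hle : (Nat.card G).minFac ≤ 3 :=
      Nat.minFac_le_of_dvd (by norm_num) (hcard ▸ dvd_mul_right 3 n)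
    have hpr : (Nat.card G).minFac.Prime := Nat.minFac_prime (by omega)
    have hne : (Nat.card G).minFac ≠ 2 := by
      rw [Ne, Nat.minFac_eq_two_iff, hcard]
      obtain ⟨k, rfl⟩ := hodd
      omega
    have := hpr.two_le
    omega
  have hcompl := hcyc.isComplement' hmin
  refine ⟨_, P, inferInstance, ?_, hP, hcompl⟩
  have hmul := hcompl.card_mul_card
  rw [hcard, hP] at hmul
  omega
end

section
/- Let n ≥ 3 be an odd integer and let m₁ ≤ m₂ ≤ m₃ be integers, each at least 2 and each dividing 9n, satisfying 1/m₁ + 1/m₂ + 1/m₃ = 1/3 + 2/(9n). Then either (m₁, m₂, m₃) = (3, 9n, 9n), or (n, m₁, m₂, m₃) is one of the six sporadic solutions: (5; 5, 9, 15), (15; 5, 9, 27), (35; 5, 9, 35), (65; 5, 9, 39), (215; 5, 9, 43), (7; 7, 9, 9). -/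
/-!
Every `mᵢ` divides the odd number `9n`, hence is odd. The right-hand side exceeds `1/3`, so
`m₁ < 9`, that is `m₁ ∈ {3, 5, 7}`.

If `m₁ = 3`, then `1/m₂ + 1/m₃ = 2/(9n)` with `m₂, m₃ ≤ 9n`, which forces `m₂ = m₃ = 9n`.
If `m₁ = 5`, then `1/m₂ + 1/m₃ > 2/15` gives `m₂ < 15`; if `m₁ = 7`, then
`1/m₂ + 1/m₃ > 4/21` gives `m₂ ≤ 10`. For each remaining pair `(m₁, m₂)` the equation reads
`1/m₃ = c + 2/(9n)` with a constant `c ≠ 0`. When `c > 0` this bounds `m₃` by `1/c`, and when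
`c < 0` (the pairs `(5, 5)` and `(5, 7)`) positivity of `1/m₃` bounds `n`. Since `m₁` and `m₂`
divide `9n`, also `n = d * t` for an explicit `d`, and `t ≥ 1` often bounds `m₃` from below.
Finitely many values remain, and for each of them the equation is linear in the last unknown.
-/

/-- The bound on the smaller of two denominators: if `2/k < 1/b + 1/c` with `b ≤ c`, cleared of
denominators, then `b < k`. -/
lemma lt_of_two_mul_lt {b c k : ℤ} (hb : 0 < b) (hbc : b ≤ c)
    (h : 2 * (b * c) < k * (b + c)) : b < k := by
  by_contra! hk
  nlinarith [mul_le_mul_of_nonneg_right hk (by linarith : (0 : ℤ) ≤ b + c)]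

/-- The case `(m₁, m₂) = (5, 9)`, where the equation becomes `n * (45 - m₃) = 10 * m₃`; this is
the source of five of the six sporadic solutions. -/
lemma solutions_five_nine {n m : ℤ} (hn : 0 < n) (hm : 9 ≤ m) (ho : m % 2 = 1)
    (h5 : n % 5 = 0) (hd : m ∣ 9 * n) (h : n * (45 - m) = 10 * m) :
    (n = 5 ∧ m = 15) ∨ (n = 15 ∧ m = 27) ∨ (n = 35 ∧ m = 35) ∨ (n = 65 ∧ m = 39) ∨
      (n = 215 ∧ m = 43) := by
  have hb : m < 45 := by
    by_contra! hc
    nlinarith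
  obtain ⟨j, rfl⟩ : ∃ j, m = 2 * j + 1 := ⟨m / 2, by omega⟩
  have : 4 ≤ j := by omega
  have : j < 22 := by omega
  interval_cases j <;> norm_num at h hd ⊢ <;> omega

/-- Solutions of `1/m₁ + 1/m₂ + 1/m₃ = 1/3 + 2/(9n)` with `n ≥ 3` odd,
`2 ≤ m₁ ≤ m₂ ≤ m₃` and each `mᵢ` dividing `9n`. -/
theorem signature_solutions_3g (n m₁ m₂ m₃ : ℤ) (hn : 3 ≤ n) (hodd : Odd n)
    (h1 : 2 ≤ m₁) (h12 : m₁ ≤ m₂) (h23 : m₂ ≤ m₃)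
    (hd1 : m₁ ∣ 9 * n) (hd2 : m₂ ∣ 9 * n) (hd3 : m₃ ∣ 9 * n)
    (heq : (1 : ℚ) / (m₁ : ℚ) + 1 / (m₂ : ℚ) + 1 / (m₃ : ℚ)
      = 1 / 3 + 2 / (9 * (n : ℚ))) :
    (m₁ = 3 ∧ m₂ = 9 * n ∧ m₃ = 9 * n) ∨
    (n, m₁, m₂, m₃) = (5, 5, 9, 15) ∨
    (n, m₁, m₂, m₃) = (15, 5, 9, 27) ∨
    (n, m₁, m₂, m₃) = (35, 5, 9, 35) ∨
    (n, m₁, m₂, m₃) = (65, 5, 9, 39) ∨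
    (n, m₁, m₂, m₃) = (215, 5, 9, 43) ∨
    (n, m₁, m₂, m₃) = (7, 7, 9, 9) := by
  have odd_of_dvd : ∀ m : ℤ, m ∣ 9 * n → m % 2 = 1 := by
    rintro m ⟨k, hk⟩
    have h9 : Odd (9 * n) := (by decide : Odd (9 : ℤ)).mul hodd
    rw [hk] at h9
    exact Int.odd_iff.mp (Int.odd_mul.mp h9).1
  have o1 := odd_of_dvd m₁ hd1
  have o2 := odd_of_dvd m₂ hd2
  have o3 := odd_of_dvd m₃ hd3
  have on := Int.odd_iff.mp hodd
  have p1 : 0 < m₁ := by omega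
  have p2 : 0 < m₂ := by omega
  have p3 : 0 < m₃ := by omega
  have pn : 0 < n := by omega
  have key : 9 * n * (m₂ * m₃ + m₁ * m₃ + m₁ * m₂) = m₁ * m₂ * m₃ * (3 * n + 2) := by
    have q1 : (m₁ : ℚ) ≠ 0 := by exact_mod_cast p1.ne'
    have q2 : (m₂ : ℚ) ≠ 0 := by exact_mod_cast p2.ne'
    have q3 : (m₃ : ℚ) ≠ 0 := by exact_mod_cast p3.ne'
    have qn : (n : ℚ) ≠ 0 := by exact_mod_cast pn.ne'
    field_simp at heq
    have : (9 * n * (m₂ * m₃ + m₁ * m₃ + m₁ * m₂) : ℚ) = m₁ * m₂ * m₃ * (3 * n + 2) := by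
      linarith
    exact_mod_cast this
  clear heq hodd odd_of_dvd
  have p23 : 0 < m₂ * m₃ := mul_pos p2 p3
  have hm1 : m₁ < 9 := by
    -- The sum of reciprocals exceeds `1/3`, but is at most `3/m₁`.
    have hlt : m₁ * m₂ * m₃ < 3 * (m₂ * m₃ + m₁ * m₃ + m₁ * m₂) := by
      have := mul_pos p1 p23
      by_contra! hc
      nlinarith [mul_le_mul_of_nonneg_left hc pn.le]
    by_contra! hc
    nlinarith [mul_le_mul_of_nonneg_right h12 p3.le, mul_le_mul_of_nonneg_right h12 p2.le,
      mul_le_mul_of_nonneg_right (h12.trans h23) p2.le, mul_le_mul_of_nonneg_right hc p23.le]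
  have l3 : m₃ ≤ 9 * n := Int.le_of_dvd (by omega) hd3
  obtain rfl | rfl | rfl : m₁ = 3 ∨ m₁ = 5 ∨ m₁ = 7 := by omega
  · left
    have h2 : 9 * n * (m₂ + m₃) = 2 * (m₂ * m₃) := by linarith
    have : 9 * n ≤ m₂ := by
      by_contra! hc
      nlinarith [mul_lt_mul_of_pos_right hc p3, mul_le_mul_of_nonneg_right l3 p2.le]
    omega
  · right
    have hm2 : m₂ < 15 := by
      refine lt_of_two_mul_lt p2 h23 ?_
      by_contra! hc
      nlinarith [mul_le_mul_of_nonneg_left hc pn.le]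
    obtain rfl | rfl | rfl | rfl | rfl :
        m₂ = 5 ∨ m₂ = 7 ∨ m₂ = 9 ∨ m₂ = 11 ∨ m₂ = 13 := by omega
    · have hb : n < 30 := by
        by_contra! hc
        nlinarith [mul_le_mul_of_nonneg_right hc p3.le]
      obtain ⟨k, rfl⟩ : (5 : ℤ) ∣ n := by omega
      have : 0 < k := by omega
      have : k < 6 := by omega
      exfalso
      interval_cases k <;> omega
    · have hb : n < 210 := by
        by_contra! hc
        nlinarith [mul_le_mul_of_nonneg_right hc p3.le]
      obtain ⟨k, rfl⟩ : (35 : ℤ) ∣ n := by omega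
      have : 0 < k := by omega
      have : k < 6 := by omega
      exfalso
      interval_cases k <;> omega
    · have := solutions_five_nine pn h23 o3 (by omega) hd3 (by linarith)
      simpa using this
    · obtain ⟨t, rfl⟩ : (55 : ℤ) ∣ n := by omega
      have h : t * (495 - 21 * m₃) = 2 * m₃ := by linarith
      have ht : 1 ≤ t := by omega
      have hb : m₃ < 24 := by
        by_contra! hc
        nlinarith
      have hb' : 21 < m₃ := by nlinarith
      obtain rfl : m₃ = 23 := by omega
      clear * - h
      omega
    · obtain ⟨t, rfl⟩ : (65 : ℤ) ∣ n := by omega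
      have h : t * (585 - 33 * m₃) = 2 * m₃ := by linarith
      have ht : 1 ≤ t := by omega
      have hb : m₃ < 18 := by
        by_contra! hc
        nlinarith
      have hb' : 16 < m₃ := by nlinarith
      obtain rfl : m₃ = 17 := by omega
      clear * - h
      omega
  · right
    have hm2 : m₂ < 11 := by
      refine lt_of_two_mul_lt p2 h23 ?_
      by_contra! hc
      nlinarith [mul_le_mul_of_nonneg_left hc pn.le]
    obtain ⟨t, rfl⟩ : (7 : ℤ) ∣ n := by omega
    have ht : 1 ≤ t := by omega
    obtain rfl | rfl : m₂ = 7 ∨ m₂ = 9 := by omega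
    · have h : t * (63 - 3 * m₃) = 2 * m₃ := by linarith
      have hb : m₃ < 21 := by
        by_contra! hc
        nlinarith
      have hb' : 12 < m₃ := by nlinarith
      clear * - h hb hb' o3
      interval_cases m₃ <;> omega
    · have h : t * (63 - 5 * m₃) = 2 * m₃ := by linarith
      have hb : m₃ < 13 := by
        by_contra! hc
        nlinarith
      obtain rfl | rfl : m₃ = 9 ∨ m₃ = 11 := by omega
      · obtain rfl : t = 1 := by linarith
        simp
      · clear * - h
        omega
end

section
/- Let m ≥ 3 be an odd integer and let m₁ ≤ m₂ ≤ m₃ be integers, each at least 2 and each dividing 9m, satisfying 1/m₁ + 1/m₂ + 1/m₃ = 1/3 + 4/(9m). Then either (m₁, m₂, m₃) = (3, 3m, 9m), or (m, m₁, m₂, m₃) is one of the seven sporadic solutions: (5; 5, 5, 45), (5; 5, 9, 9), (35; 5, 7, 315), (25; 5, 9, 25), (55; 5, 9, 33), (205; 5, 9, 41), (7; 7, 7, 9). -/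
/-!
Write `9m = m₁a = m₂b = m₃c`. Multiplying the equation by `9m` gives `a + b + c = 3m + 4` with
`a ≥ b ≥ c ≥ 1`, and `a`, `b`, `c`, `m₁`, `m₂`, `m₃` are all odd.
* From `3a ≥ 3m + 4` follows `m₁ < 9`, so `m₁ ∈ {3, 5, 7}`.
* If `m₁ = 3`, then `a = 3m` and `b + c = 4`, so `(b, c) = (3, 1)`: the infinite family.
* If `m₁ = 5` or `7`, then `2b ≥ 3m + 4 - a` bounds `m₂` by `15` or `11`. For fixed `m₂` the
  equation reads `c = 9mκ + 4` with `κ = 1/3 - 1/m₁ - 1/m₂`. If `κ < 0`, then `c < 4` and `m`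
  is determined by `c`; if `κ > 0`, then `m₃ < 1/κ ≤ 45`, and `m₃` determines `m`.
-/

set_option maxHeartbeats 1000000 in
/-- Solutions of `1/m₁ + 1/m₂ + 1/m₃ = 1/3 + 4/(9m)` with `m ≥ 3` odd,
`2 ≤ m₁ ≤ m₂ ≤ m₃` and each `mᵢ` dividing `9m`. -/
theorem signature_solutions_3g3 (m m₁ m₂ m₃ : ℤ) (hm : 3 ≤ m) (hodd : Odd m)
    (h1 : 2 ≤ m₁) (h12 : m₁ ≤ m₂) (h23 : m₂ ≤ m₃)
    (hd1 : m₁ ∣ 9 * m) (hd2 : m₂ ∣ 9 * m) (hd3 : m₃ ∣ 9 * m)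
    (heq : (1 : ℚ) / (m₁ : ℚ) + 1 / (m₂ : ℚ) + 1 / (m₃ : ℚ)
      = 1 / 3 + 4 / (9 * (m : ℚ))) :
    (m₁ = 3 ∧ m₂ = 3 * m ∧ m₃ = 9 * m) ∨
    (m, m₁, m₂, m₃) = (5, 5, 5, 45) ∨
    (m, m₁, m₂, m₃) = (5, 5, 9, 9) ∨
    (m, m₁, m₂, m₃) = (35, 5, 7, 315) ∨
    (m, m₁, m₂, m₃) = (25, 5, 9, 25) ∨
    (m, m₁, m₂, m₃) = (55, 5, 9, 33) ∨
    (m, m₁, m₂, m₃) = (205, 5, 9, 41) ∨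
    (m, m₁, m₂, m₃) = (7, 7, 7, 9) := by
  obtain ⟨a, ha⟩ := hd1
  obtain ⟨b, hb⟩ := hd2
  obtain ⟨c, hc⟩ := hd3
  obtain ⟨k, hk⟩ := hodd
  have hsum : a + b + c = 3 * m + 4 := by
    have recip : ∀ n x : ℤ, 2 ≤ n → 9 * m = n * x → (1 : ℚ) / n = x / (9 * m) := by
      intro n x hn hx
      have hn' : (n : ℚ) ≠ 0 := by exact_mod_cast (by omega : n ≠ 0)
      have hm' : (m : ℚ) ≠ 0 := by exact_mod_cast (by omega : m ≠ 0)
      have hx' : (9 * m : ℚ) = n * x := by exact_mod_cast hx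
      field_simp
      linarith
    rw [recip m₁ a h1 ha, recip m₂ b (by omega) hb, recip m₃ c (by omega) hc] at heq
    have hm' : (m : ℚ) ≠ 0 := by exact_mod_cast (by omega : m ≠ 0)
    field_simp at heq
    have h' : (a + b + c : ℚ) = 3 * m + 4 := by linarith
    exact_mod_cast h'
  clear heq
  have hcpos : 0 < c := by
    by_contra h
    nlinarith
  have hbpos : 0 < b := by
    by_contra h
    nlinarith
  have hcb : c ≤ b := by
    by_contra h
    nlinarith
  have hba : b ≤ a := by
    by_contra h
    nlinarith
  have hm1 : m₁ < 9 := by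
    by_contra h
    nlinarith
  simp only [Prod.mk.injEq]
  interval_cases m₁
  -- Even values of `m₁` contradict the oddness of `9m`.
  · exfalso; omega
  · have hc3 : c < 3 := by omega
    have hb4 : b < 4 := by omega
    interval_cases c <;> interval_cases b <;> first | (exfalso; omega) | (left; omega)
  · exfalso; omega
  · have hm2 : m₂ < 15 := by
      by_contra h
      nlinarith
    interval_cases m₂
    · have hc4 : c < 4 := by omega
      interval_cases c <;> first | (exfalso; omega) | (norm_num; omega)
    · exfalso; omega
    · have hc4 : c < 4 := by omega
      interval_cases c <;> first | (exfalso; omega) | (norm_num; omega)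
    · exfalso; omega
    · have hm3 : m₃ < 45 := by
        by_contra h
        nlinarith
      interval_cases m₃ <;> first | (exfalso; omega) | (norm_num; omega)
    · exfalso; omega
    · have hm3 : m₃ < 24 := by
        by_contra h
        nlinarith
      interval_cases m₃ <;> (exfalso; omega)
    · exfalso; omega
    · have hm3 : m₃ < 18 := by
        by_contra h
        nlinarith
      interval_cases m₃ <;> (exfalso; omega)
    · exfalso; omega
  · exfalso; omega
  · have hm2 : m₂ < 11 := by
      by_contra h
      nlinarith
    interval_cases m₂
    · have hm3 : m₃ < 21 := by
        by_contra h
        nlinarith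
      interval_cases m₃ <;> first | (exfalso; omega) | (norm_num; omega)
    · exfalso; omega
    · have hm3 : m₃ < 13 := by
        by_contra h
        nlinarith
      interval_cases m₃ <;> (exfalso; omega)
    · exfalso; omega
  · exfalso; omega
end

section
/- Let g ≥ 5 be an odd integer not divisible by 3. In the direct product group C₃ × D_g, where C₃ is the cyclic group of order 3 and D_g is the dihedral group of order 2g, there exist elements x and y such that x has order 2, y has order 6, the product x·y has order 3g, and x and y generate the whole group. (Explicitly, one may take x = (1, s) and y = (t, s·r) where t generates C₃, r is a rotation of order g, and s is a reflection.) -/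
/-!
With `t` a generator of `C₃`, take `x = (1, s)` and `y = (t, s r)`, so that `x * y = (t, r)`.
The orders are least common multiples of the orders of the components, and `3` is coprime to `g`.
Generation is a counting argument: the generated subgroup contains elements of the coprime
orders `2` and `3g`, so by Lagrange it has at least `6g` elements, as many as `C₃ × D_g`.
-/

/-- For `g ≥ 5` odd not divisible by 3, the group `C₃ × D_g` has a generating pair
`x, y` with `x` of order 2, `y` of order 6 and `x * y` of order `3g`. -/
theorem generating_pair_Z3_Dg (g : ℕ) (hg : 5 ≤ g) (hodd : Odd g) (h3 : ¬ (3 ∣ g)) :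
    ∃ x y : Multiplicative (ZMod 3) × DihedralGroup g,
      orderOf x = 2 ∧ orderOf y = 6 ∧ orderOf (x * y) = 3 * g ∧
      Subgroup.closure {x, y} = ⊤ := by
  have : NeZero g := ⟨by omega⟩
  set t : Multiplicative (ZMod 3) := Multiplicative.ofAdd 1 with ht
  have t_order : orderOf t = 3 := by
    rw [ht, orderOf_ofAdd_eq_addOrderOf, ZMod.addOrderOf_one]
  have coprime_three : Nat.Coprime 3 g := (Nat.Prime.coprime_iff_not_dvd Nat.prime_three).2 h3
  set x : Multiplicative (ZMod 3) × DihedralGroup g := (1, DihedralGroup.sr 0) with hx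
  set y : Multiplicative (ZMod 3) × DihedralGroup g := (t, DihedralGroup.sr 1) with hy
  have x_order : orderOf x = 2 := by
    simp [hx, Prod.orderOf_mk]
  have y_order : orderOf y = 6 := by
    rw [hy, Prod.orderOf_mk, t_order, DihedralGroup.orderOf_sr]
    rfl
  have xy_order : orderOf (x * y) = 3 * g := by
    have xy_eq : x * y = (t, DihedralGroup.r 1) := by simp [hx, hy]
    rw [xy_eq, Prod.orderOf_mk, t_order, DihedralGroup.orderOf_r_one, coprime_three.lcm_eq_mul]
  refine ⟨x, y, x_order, y_order, xy_order, ?_⟩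
  have x_mem : x ∈ Subgroup.closure {x, y} := Subgroup.subset_closure (by simp)
  have y_mem : y ∈ Subgroup.closure {x, y} := Subgroup.subset_closure (by simp)
  have two_dvd : 2 ∣ Nat.card (Subgroup.closure {x, y}) :=
    x_order ▸ Subgroup.orderOf_dvd_natCard _ x_mem
  have three_mul_dvd : 3 * g ∣ Nat.card (Subgroup.closure {x, y}) :=
    xy_order ▸ Subgroup.orderOf_dvd_natCard _ (mul_mem x_mem y_mem)
  have coprime_two : Nat.Coprime 2 (3 * g) :=
    Nat.coprime_two_left.2 (Odd.mul (by decide) hodd)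
  have card_dvd := coprime_two.mul_dvd_of_dvd_of_dvd two_dvd three_mul_dvd
  have card_group : Nat.card (Multiplicative (ZMod 3) × DihedralGroup g) = 2 * (3 * g) := by
    rw [Nat.card_prod, DihedralGroup.nat_card, Nat.card_congr Multiplicative.toAdd, Nat.card_zmod]
    ring
  apply Subgroup.eq_top_of_le_card
  rw [card_group]
  exact Nat.le_of_dvd Nat.card_pos card_dvd
end

section
/- Let p ≥ 7 be a prime. In the dihedral group D_{3p} of order 6p, generated by a rotation a of order 3p and a reflection b of order 2 with b·a·b = a⁻¹, there exist elements x₁, x₂, x₃, x₄ of respective orders 2, 2, 3, 3p such that x₁·x₂·x₃·x₄ = 1 and x₁, x₂, x₃, x₄ generate D_{3p}. (Explicitly, one may take x₁ = b, x₂ = b·a^{2p−1}, x₃ = aᵖ, x₄ = a.) -/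
open DihedralGroup in
/-- For `p ≥ 7` prime, the dihedral group `D_{3p}` of order `6p` has a generating
vector of signature `(0; 2, 2, 3, 3p)`. -/
theorem generating_vector_D3p (p : ℕ) (hp : p.Prime) (hp7 : 7 ≤ p) :
    ∃ x₁ x₂ x₃ x₄ : DihedralGroup (3 * p),
      orderOf x₁ = 2 ∧ orderOf x₂ = 2 ∧ orderOf x₃ = 3 ∧ orderOf x₄ = 3 * p ∧
      x₁ * x₂ * x₃ * x₄ = 1 ∧ Subgroup.closure {x₁, x₂, x₃, x₄} = ⊤ := by
  -- With `a = r 1` and `b = sr 0` this is `(b, b a^(2p-1), a^p, a)`, as `2p - 1 = -(p + 1)` mod `3p`.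
  refine ⟨sr 0, sr (-((p : ZMod (3 * p)) + 1)), r 1 ^ p, r 1, orderOf_sr _, orderOf_sr _, ?_,
    orderOf_r_one, ?_, ?_⟩
  · rw [orderOf_pow_of_dvd hp.ne_zero (by rw [orderOf_r_one]; exact dvd_mul_left p 3),
      orderOf_r_one, Nat.mul_div_cancel _ hp.pos]
  · rw [r_one_pow, sr_mul_sr, r_mul_r, r_mul_r, one_def]
    congr 1
    ring
  · rw [eq_top_iff]
    have hr : ∀ i : ZMod (3 * p), r i ∈ Subgroup.closure
        {sr 0, sr (-((p : ZMod (3 * p)) + 1)), r 1 ^ p, r 1} := by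
      intro i
      obtain ⟨k, rfl⟩ := ZMod.intCast_surjective i
      rw [← r_one_zpow]
      exact Subgroup.zpow_mem _ (Subgroup.subset_closure (by simp)) k
    rintro (i | i) -
    · exact hr i
    · rw [← zero_add i, ← sr_mul_r]
      exact Subgroup.mul_mem _ (Subgroup.subset_closure (by simp)) (hr i)
end

section
/- Let p ≥ 7 be a prime. In the direct product group D_p × C₃, where D_p is the dihedral group of order 2p (generated by a rotation r of order p and a reflection s of order 2) and C₃ = ⟨t⟩ is cyclic of order 3, the elements x₁ = (s,1), x₂ = (s·r,1), x₃ = (1,t), x₄ = (r⁻¹, t⁻¹) have respective orders 2, 2, 3, 3p, satisfy x₁·x₂·x₃·x₄ = 1, and generate the whole group. -/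
/-!
Orders are computed componentwise: the order of a pair is the lcm of the orders of its entries, and
`lcm (p, 3) = 3p` because `p ≥ 7` is a prime different from `3`. For generation, `x₁ x₂ = (r, 1)`,
so the subgroup generated by the `xᵢ` contains `(r, 1)`, `(s, 1)` and `(1, t)`; every element of the
group is `(rⁱ, tᵏ)` or `(s rⁱ, tᵏ)`.
-/

lemma orderOf_ofAdd_one_three : orderOf (Multiplicative.ofAdd (1 : ZMod 3)) = 3 := by
  rw [orderOf_ofAdd_eq_addOrderOf, ZMod.addOrderOf_one]

/-- For `p ≥ 7` prime, the explicit elements `x₁ = (s, 1)`, `x₂ = (s·r, 1)`,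
`x₃ = (1, t)`, `x₄ = (r⁻¹, t⁻¹)` of `D_p × C₃` have orders `2, 2, 3, 3p`, have
product 1, and generate the whole group. -/
theorem generating_vector_Dp_Z3 (p : ℕ) (hp : p.Prime) (hp7 : 7 ≤ p) :
    let x₁ : DihedralGroup p × Multiplicative (ZMod 3) := (DihedralGroup.sr 0, 1)
    let x₂ : DihedralGroup p × Multiplicative (ZMod 3) :=
      (DihedralGroup.sr 0 * DihedralGroup.r 1, 1)
    let x₃ : DihedralGroup p × Multiplicative (ZMod 3) :=
      (1, Multiplicative.ofAdd (1 : ZMod 3))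
    let x₄ : DihedralGroup p × Multiplicative (ZMod 3) :=
      ((DihedralGroup.r 1)⁻¹, (Multiplicative.ofAdd (1 : ZMod 3))⁻¹)
    orderOf x₁ = 2 ∧ orderOf x₂ = 2 ∧ orderOf x₃ = 3 ∧ orderOf x₄ = 3 * p ∧
      x₁ * x₂ * x₃ * x₄ = 1 ∧ Subgroup.closure {x₁, x₂, x₃, x₄} = ⊤ := by
  intro x₁ x₂ x₃ x₄
  have h12 : x₁ * x₂ = (DihedralGroup.r 1, 1) := by
    simp [x₁, x₂]
  refine ⟨?_, ?_, ?_, ?_, ?_, ?_⟩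
  · simp [x₁, Prod.orderOf_mk]
  · simp [x₂, Prod.orderOf_mk]
  · simp only [x₃, Prod.orderOf_mk, orderOf_one, orderOf_ofAdd_one_three]
    simp
  · have hcop : Nat.Coprime p 3 := (Nat.coprime_primes hp Nat.prime_three).2 (by omega)
    simp only [x₄, Prod.orderOf_mk, orderOf_inv, orderOf_ofAdd_one_three,
      DihedralGroup.orderOf_r_one]
    rw [hcop.lcm_eq_mul, mul_comm]
  · rw [h12]
    simp [x₃, x₄]
  · have : NeZero p := ⟨hp.ne_zero⟩
    set H := Subgroup.closure {x₁, x₂, x₃, x₄}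
    have m₁ : x₁ ∈ H := Subgroup.subset_closure (by simp)
    have m₂ : x₂ ∈ H := Subgroup.subset_closure (by simp)
    have m₃ : x₃ ∈ H := Subgroup.subset_closure (by simp)
    have mr (i : ZMod p) : ((DihedralGroup.r i, 1) :
        DihedralGroup p × Multiplicative (ZMod 3)) ∈ H := by
      have h := H.pow_mem (H.mul_mem m₁ m₂) i.val
      rw [h12] at h
      simpa using h
    have mt (k : Multiplicative (ZMod 3)) : ((1, k) :
        DihedralGroup p × Multiplicative (ZMod 3)) ∈ H := by
      have h := H.pow_mem m₃ k.toAdd.val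
      have hk : x₃ ^ k.toAdd.val = (1, k) := by
        simp [x₃, ← ofAdd_nsmul]
      rwa [hk] at h
    rw [eq_top_iff]
    rintro ⟨d, k⟩ -
    rcases d with i | i
    · simpa using H.mul_mem (mr i) (mt k)
    · simpa [x₁] using H.mul_mem (H.mul_mem m₁ (mr i)) (mt k)
end

section
/- Let p ≥ 7 be a prime. In the direct product group D_p × C₆, where D_p is the dihedral group of order 2p and C₆ is the cyclic group of order 6, there exist elements x and y such that x has order 2, y has order 6, the product x·y has order 6p, and x and y generate the whole group. (Explicitly, with r a rotation of order p, s a reflection, and T a generator of C₆, one may take x = (s, T³) and y = (s·r⁻¹, T²).) -/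
/-! Write `T` for the generator `1` of `C₆`, and take `x = (s, T³)`, `y = (s r, T²)`, so that
`x * y = (r, T⁵)`. The orders are least common multiples of the orders of the components, and
`p` is coprime to `6`. By the Chinese remainder theorem the powers of `x * y` are exactly the
pairs (rotation, element of `C₆`); multiplying these by `x` gives the remaining elements. -/

open DihedralGroup in
/-- Since `p` is coprime to `6`, the element `(r, T⁵)` generates all of `⟨r⟩ × C₆`. -/
lemma exists_pow_eq_rotation (p : ℕ) [NeZero p] (h : p.Coprime 6) (i : ZMod p)
    (c : Multiplicative (ZMod 6)) :
    ∃ k : ℕ, ((r 1, Multiplicative.ofAdd 5) : DihedralGroup p × Multiplicative (ZMod 6)) ^ k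
      = (r i, c) := by
  -- `T⁵ = T⁻¹`, so the exponent must be congruent to `-c` modulo `6`.
  obtain ⟨k, hk1, hk2⟩ := Nat.chineseRemainder h i.val (-c.toAdd).val
  refine ⟨k, ?_⟩
  have e1 : (k : ZMod p) = i := by
    rw [(ZMod.natCast_eq_natCast_iff _ _ _).2 hk1, ZMod.natCast_zmod_val]
  have e2 : (k : ZMod 6) = -c.toAdd := by
    rw [(ZMod.natCast_eq_natCast_iff _ _ _).2 hk2, ZMod.natCast_zmod_val]
  rw [Prod.pow_mk, r_one_pow, e1, ← ofAdd_nsmul, nsmul_eq_mul, e2]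
  congr 1
  apply Multiplicative.toAdd.injective
  rw [toAdd_ofAdd]
  generalize c.toAdd = d
  revert d
  decide

/-- For `p ≥ 7` prime, the group `D_p × C₆` has a generating pair `x, y` with `x`
of order 2, `y` of order 6 and `x * y` of order `6p`. -/
theorem generating_pair_Dp_Z6 (p : ℕ) (hp : p.Prime) (hp7 : 7 ≤ p) :
    ∃ x y : DihedralGroup p × Multiplicative (ZMod 6),
      orderOf x = 2 ∧ orderOf y = 6 ∧ orderOf (x * y) = 6 * p ∧
      Subgroup.closure {x, y} = ⊤ := by
  have : NeZero p := ⟨hp.ne_zero⟩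
  have hcop : p.Coprime 6 := by
    rw [hp.coprime_iff_not_dvd]
    intro h
    have := Nat.le_of_dvd (by norm_num) h
    omega
  have o3 : orderOf (Multiplicative.ofAdd (3 : ZMod 6)) = 2 := by
    rw [orderOf_ofAdd_eq_addOrderOf]
    simpa using ZMod.addOrderOf_coe 3 (n := 6) (by norm_num)
  have o2 : orderOf (Multiplicative.ofAdd (2 : ZMod 6)) = 3 := by
    rw [orderOf_ofAdd_eq_addOrderOf]
    simpa using ZMod.addOrderOf_coe 2 (n := 6) (by norm_num)
  have o5 : orderOf (Multiplicative.ofAdd (5 : ZMod 6)) = 6 := by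
    rw [orderOf_ofAdd_eq_addOrderOf]
    simpa using ZMod.addOrderOf_coe 5 (n := 6) (by norm_num)
  have hmul : ((.sr 0, Multiplicative.ofAdd 3) : DihedralGroup p × Multiplicative (ZMod 6)) *
      (.sr 1, Multiplicative.ofAdd 2) = (.r 1, Multiplicative.ofAdd 5) := by
    rw [Prod.mk_mul_mk, DihedralGroup.sr_mul_sr, sub_zero, ← ofAdd_add]
    rfl
  refine ⟨(.sr 0, Multiplicative.ofAdd 3), (.sr 1, Multiplicative.ofAdd 2), ?_, ?_, ?_, ?_⟩
  · rw [Prod.orderOf_mk, DihedralGroup.orderOf_sr, o3]; rfl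
  · rw [Prod.orderOf_mk, DihedralGroup.orderOf_sr, o2]; rfl
  · rw [hmul, Prod.orderOf_mk, DihedralGroup.orderOf_r_one, o5, hcop.lcm_eq_mul, mul_comm]
  · rw [eq_top_iff]
    set H : Subgroup (DihedralGroup p × Multiplicative (ZMod 6)) := Subgroup.closure _
    have hx : (.sr 0, Multiplicative.ofAdd 3) ∈ H := Subgroup.subset_closure (by simp)
    have hy : (.sr 1, Multiplicative.ofAdd 2) ∈ H := Subgroup.subset_closure (by simp)
    have hr (i : ZMod p) (c : Multiplicative (ZMod 6)) : (.r i, c) ∈ H := by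
      obtain ⟨k, hk⟩ := exists_pow_eq_rotation p hcop i c
      rw [← hk, ← hmul]
      exact H.pow_mem (H.mul_mem hx hy) k
    rintro ⟨i | i, c⟩ -
    · exact hr i c
    · have := H.mul_mem hx (hr i ((Multiplicative.ofAdd 3)⁻¹ * c))
      rwa [Prod.mk_mul_mk, DihedralGroup.sr_mul_r, zero_add, mul_inv_cancel_left] at this
end

section
/- Let p ≥ 7 be a prime. In the direct product group D_p × C₃, where D_p is the dihedral group of order 2p and C₃ = ⟨t⟩ is cyclic of order 3, there exist elements x and y such that x has order 6, y has order 6, the product x·y has order 3p, and x and y generate the whole group. (Explicitly, with r a rotation of order p and s a reflection, one may take x = (s, t) and y = (s·r, t).) -/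
/-! The witnesses are `x = (s, t)` and `y = (s r, t)`, with product `(r, t²)`; the orders are
least common multiples of the orders of the components. The subgroup generated by `x` and `y`
contains elements of order `6` and `3p`, so its order is divisible by `lcm(6, 3p) = 6p`, which is
the order of the whole group. -/

/-- For `p ≥ 7` prime, the group `D_p × C₃` has a generating pair `x, y` with `x`
of order 6, `y` of order 6 and `x * y` of order `3p`. -/
theorem generating_pair_Dp_Z3_66 (p : ℕ) (hp : p.Prime) (hp7 : 7 ≤ p) :
    ∃ x y : DihedralGroup p × Multiplicative (ZMod 3),
      orderOf x = 6 ∧ orderOf y = 6 ∧ orderOf (x * y) = 3 * p ∧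
      Subgroup.closure {x, y} = ⊤ := by
  have : NeZero p := ⟨hp.ne_zero⟩
  have ht1 : orderOf (Multiplicative.ofAdd (1 : ZMod 3)) = 3 :=
    orderOf_eq_prime (by decide) (by decide)
  have ht2 : orderOf (Multiplicative.ofAdd (1 : ZMod 3) * Multiplicative.ofAdd 1) = 3 :=
    orderOf_eq_prime (by decide) (by decide)
  have h3 : Nat.Coprime p 3 :=
    (Nat.coprime_primes hp Nat.prime_three).2 (by omega)
  have h2 : Nat.Coprime 2 p :=
    (Nat.coprime_primes Nat.prime_two hp).2 (by omega)
  let x : DihedralGroup p × Multiplicative (ZMod 3) := (.sr 0, .ofAdd 1)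
  let y : DihedralGroup p × Multiplicative (ZMod 3) := (.sr 1, .ofAdd 1)
  have hx : orderOf x = 6 := by
    rw [Prod.orderOf, DihedralGroup.orderOf_sr, ht1]; rfl
  have hy : orderOf y = 6 := by
    rw [Prod.orderOf, DihedralGroup.orderOf_sr, ht1]; rfl
  have hxy : orderOf (x * y) = 3 * p := by
    rw [Prod.orderOf, Prod.fst_mul, Prod.snd_mul, DihedralGroup.sr_mul_sr, sub_zero,
      DihedralGroup.orderOf_r_one, ht2, h3.lcm_eq_mul, mul_comm]
  refine ⟨x, y, hx, hy, hxy, ?_⟩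
  have mx : x ∈ Subgroup.closure {x, y} := Subgroup.subset_closure (by simp)
  have my : y ∈ Subgroup.closure {x, y} := Subgroup.subset_closure (by simp)
  have d1 := Subgroup.orderOf_dvd_natCard _ mx
  have d2 := Subgroup.orderOf_dvd_natCard _ (mul_mem mx my)
  rw [hx] at d1
  rw [hxy] at d2
  have hcard : Nat.card (DihedralGroup p × Multiplicative (ZMod 3)) = 3 * (2 * p) := by
    rw [Nat.card_prod, DihedralGroup.nat_card, Nat.card_congr Multiplicative.toAdd, Nat.card_zmod,
      mul_comm]
  apply Subgroup.eq_top_of_card_eq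
  apply Nat.dvd_antisymm (Subgroup.card_subgroup_dvd_card _)
  rw [hcard, ← h2.lcm_eq_mul, ← Nat.lcm_mul_left]
  exact Nat.lcm_dvd d1 d2
end

section
/- There exists a finite group G of order 63 that is not cyclic, together with elements x, y ∈ G such that x has order 7, y has order 9, the product x·y has order 9, and x and y generate G. (One such group is the semidirect product ⟨a, b : a⁷ = b⁹ = 1, b·a·b⁻¹ = a⁴⟩ with x = a and y = b.) -/
/-!
The group is the semidirect product `C₇ ⋊ C₉` in which a generator of `C₉` acts on `C₇` as
multiplication by `4`; this is an action because `4` has order `3 ∣ 9` modulo `7`. It is non-abelian,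
hence not cyclic. For the standard generators `x` of `C₇` and `y` of `C₉`, the orders of `x`, `y`
and `x * y` are found by computing powers, and the subgroup they generate has order divisible by
`7` and by `9`, hence is everything.
-/

/-- The semidirect product `⟨a, b : a⁷ = b⁹ = 1, b a b⁻¹ = a⁴⟩`; the pair `(u, v)` stands
for `a ^ u * b ^ v`. -/
structure Semi63 where
  /-- The exponent of `a`. -/
  u : ZMod 7
  /-- The exponent of `b`. -/
  v : ZMod 9
  deriving DecidableEq

namespace Semi63

/-- The action of `C₉` on `C₇`: the element `v` multiplies by `4 ^ v`. -/
def act (v : ZMod 9) : ZMod 7 := 4 ^ v.val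

lemma act_add : ∀ v w : ZMod 9, act (v + w) = act v * act w := by decide

lemma act_zero : act 0 = 1 := by decide

instance : Group Semi63 where
  mul g h := ⟨g.u + act g.v * h.u, g.v + h.v⟩
  one := ⟨0, 0⟩
  inv g := ⟨-(act (-g.v) * g.u), -g.v⟩
  mul_assoc g h k := by
    change Semi63.mk _ _ = Semi63.mk _ _
    congr 1
    · change g.u + act g.v * h.u + act (g.v + h.v) * k.u
        = g.u + act g.v * (h.u + act h.v * k.u)
      rw [act_add]
      ring
    · exact add_assoc _ _ _
  one_mul g := by
    change Semi63.mk (0 + act 0 * g.u) (0 + g.v) = g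
    simp [act_zero]
  mul_one g := by
    change Semi63.mk (g.u + act g.v * 0) (g.v + 0) = g
    simp
  inv_mul_cancel g := by
    change Semi63.mk (-(act (-g.v) * g.u) + act (-g.v) * g.u) (-g.v + g.v) = Semi63.mk 0 0
    simp

/-- The underlying bijection with `ZMod 7 × ZMod 9`. -/
def equivProd : Semi63 ≃ ZMod 7 × ZMod 9 where
  toFun g := (g.u, g.v)
  invFun p := ⟨p.1, p.2⟩
  left_inv _ := rfl
  right_inv _ := rfl

instance : Finite Semi63 := Finite.of_equiv _ equivProd.symm

lemma card_eq : Nat.card Semi63 = 63 := by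
  rw [Nat.card_congr equivProd, Nat.card_prod, Nat.card_zmod, Nat.card_zmod]

lemma orderOf_a : orderOf (⟨1, 0⟩ : Semi63) = 7 :=
  haveI : Fact (Nat.Prime 7) := ⟨by norm_num⟩
  orderOf_eq_prime (by decide) (by decide)

lemma orderOf_b : orderOf (⟨0, 1⟩ : Semi63) = 9 :=
  orderOf_eq_prime_pow (p := 3) (n := 1) (by decide) (by decide)

lemma orderOf_ab : orderOf ((⟨1, 0⟩ : Semi63) * ⟨0, 1⟩) = 9 :=
  orderOf_eq_prime_pow (p := 3) (n := 1) (by decide) (by decide)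

lemma closure_eq_top : Subgroup.closure {(⟨1, 0⟩ : Semi63), ⟨0, 1⟩} = ⊤ := by
  set H := Subgroup.closure {(⟨1, 0⟩ : Semi63), ⟨0, 1⟩}
  have h7 : 7 ∣ Nat.card H :=
    orderOf_a ▸ Subgroup.orderOf_dvd_natCard H (Subgroup.subset_closure (by simp))
  have h9 : 9 ∣ Nat.card H :=
    orderOf_b ▸ Subgroup.orderOf_dvd_natCard H (Subgroup.subset_closure (by simp))
  have h63 : 7 * 9 ∣ Nat.card H := Nat.Coprime.mul_dvd_of_dvd_of_dvd (by norm_num) h7 h9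
  apply Subgroup.eq_top_of_card_eq
  exact Nat.dvd_antisymm (Subgroup.card_subgroup_dvd_card H) (card_eq ▸ h63)

lemma not_isCyclic : ¬ IsCyclic Semi63 := fun h =>
  absurd (h.isMulCommutative.is_comm.comm (⟨1, 0⟩ : Semi63) ⟨0, 1⟩) (by decide)

end Semi63

/-- There is a non-cyclic group of order 63 generated by an element of order 7 and
an element of order 9 whose product has order 9. -/
theorem exceptional_genus_21 :
    ∃ (G : Type) (_ : Group G) (_ : Finite G),
      Nat.card G = 63 ∧ ¬ IsCyclic G ∧
      ∃ x y : G, orderOf x = 7 ∧ orderOf y = 9 ∧ orderOf (x * y) = 9 ∧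
        Subgroup.closure {x, y} = ⊤ :=
  ⟨Semi63, inferInstance, inferInstance, Semi63.card_eq, Semi63.not_isCyclic,
    ⟨1, 0⟩, ⟨0, 1⟩, Semi63.orderOf_a, Semi63.orderOf_b, Semi63.orderOf_ab,
    Semi63.closure_eq_top⟩
end

section
/- Let m ≥ 5 be an odd integer not divisible by 3, let ζ ∈ ℂ be a primitive m-th root of unity, and let ω ∈ ℂ be a primitive cube root of unity. Then the field extension ℚ(ζ + ζ⁻¹, ω) of ℚ has degree φ(m), where φ is Euler's totient function. -/
/-!
The field `F = ℚ(ζ + ζ⁻¹)` is contained in `ℝ`. Both `ζ` and `ω` are non-real roots of a monic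
quadratic over `F`, namely `X² - (ζ + ζ⁻¹) X + 1` and `X² + X + 1`, so both have degree exactly two
over `F` (`finrank_adjoin_pair_of_quadratic`). Hence
`[ℚ(ζ + ζ⁻¹, ω) : ℚ] = 2 [F : ℚ] = [F(ζ) : ℚ] = [ℚ(ζ) : ℚ] = φ(m)`.
-/

open IntermediateField Polynomial ComplexConjugate

/-- A non-real root `x` of `X² - a X + 1`, with `a` in the real field `ℚ(s)`, has degree two over
`ℚ(s)`, so adjoining it doubles the degree over `ℚ`. -/
lemma finrank_adjoin_pair_of_quadratic (s x a : ℂ) (hs : conj s = s) (hx : conj x ≠ x)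
    (ha : a ∈ ℚ⟮s⟯) (h : x ^ 2 - a * x + 1 = 0) :
    Module.finrank ℚ (IntermediateField.adjoin ℚ {s, x} : IntermediateField ℚ ℂ)
      = Module.finrank ℚ ℚ⟮s⟯ * 2 := by
  have hreal : x ∉ ℚ⟮s⟯ := by
    intro hmem
    have hle : ℚ⟮s⟯ ≤ (Complex.ofRealAm.restrictScalars ℚ).fieldRange := by
      rw [adjoin_simple_le_iff]
      obtain ⟨r, hr⟩ := Complex.conj_eq_iff_real.1 hs
      exact ⟨r, hr.symm⟩
    obtain ⟨r, hr⟩ := hle hmem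
    exact hx (Complex.conj_eq_iff_real.2 ⟨r, hr.symm⟩)
  let p : (ℚ⟮s⟯)[X] := X ^ 2 - C ⟨a, ha⟩ * X + 1
  have hpdeg : p.natDegree = 2 := by
    simp only [p]
    compute_degree!
  have hp0 : p ≠ 0 := by
    intro h0
    simp [h0] at hpdeg
  have hmonic : p.Monic := by
    simp only [p]
    monicity!
  have hpx : aeval x p = 0 := by
    simpa [p, IntermediateField.algebraMap_apply] using h
  have hint : IsIntegral ℚ⟮s⟯ x := ⟨p, hmonic, hpx⟩
  have hdeg : (minpoly ℚ⟮s⟯ x).natDegree = 2 := by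
    apply le_antisymm
    · exact hpdeg ▸ natDegree_le_of_dvd (minpoly.dvd _ _ hpx) hp0
    · rw [minpoly.two_le_natDegree_iff hint]
      rintro ⟨y, hy⟩
      exact hreal (hy ▸ y.2)
  rw [← adjoin_simple_adjoin_simple]
  have := Module.finrank_mul_finrank ℚ ℚ⟮s⟯ ℚ⟮s⟯⟮x⟯
  rw [adjoin.finrank hint, hdeg] at this
  exact this.symm

lemma IsPrimitiveRoot.conj_ne_self {n : ℕ} (hn : 3 ≤ n) {z : ℂ} (hz : IsPrimitiveRoot z n) :
    conj z ≠ z := by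
  intro h
  have hnorm : ‖z‖ = 1 := hz.norm'_eq_one (by omega)
  have h2 : z ^ 2 = 1 := by
    have := Complex.mul_conj' z
    rw [h, hnorm] at this
    rw [sq, this]
    simp
  have := Nat.le_of_dvd (by norm_num) (hz.dvd_of_pow_eq_one 2 h2)
  omega


/-- For `m ≥ 5` odd not divisible by 3, `ζ` a primitive `m`-th root of unity and
`ω` a primitive cube root of unity in `ℂ`, the field `ℚ(ζ + ζ⁻¹, ω)` has degree
`φ(m)` over `ℚ`. -/
theorem character_field_degree (m : ℕ) (hm : 5 ≤ m) (hodd : Odd m) (h3 : ¬ (3 ∣ m))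
    (ζ ω : ℂ) (hζ : IsPrimitiveRoot ζ m) (hω : IsPrimitiveRoot ω 3) :
    Module.finrank ℚ (IntermediateField.adjoin ℚ {ζ + ζ⁻¹, ω} : IntermediateField ℚ ℂ)
      = Nat.totient m := by
  have hs : conj (ζ + ζ⁻¹) = ζ + ζ⁻¹ := by
    rw [Complex.inv_eq_conj (hζ.norm'_eq_one (by omega)), map_add, Complex.conj_conj, add_comm]
  have hζ0 : ζ ≠ 0 := hζ.ne_zero (by omega)
  have hω2 : ω ^ 2 - (-1) * ω + 1 = 0 := by
    have := hω.geom_sum_eq_zero (by norm_num)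
    simp only [Finset.sum_range_succ, Finset.sum_range_zero] at this
    linear_combination this
  have hζ2 : ζ ^ 2 - (ζ + ζ⁻¹) * ζ + 1 = 0 := by
    field_simp
    ring
  rw [finrank_adjoin_pair_of_quadratic _ ω (-1) hs (hω.conj_ne_self le_rfl)
      (neg_mem (one_mem _)) hω2,
    ← finrank_adjoin_pair_of_quadratic _ ζ _ hs (hζ.conj_ne_self (by omega))
      (mem_adjoin_simple_self ℚ _) hζ2]
  have hadj : (IntermediateField.adjoin ℚ {ζ + ζ⁻¹, ζ} : IntermediateField ℚ ℂ) = ℚ⟮ζ⟯ := by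
    have hmem := mem_adjoin_simple_self ℚ ζ
    apply le_antisymm
    · rw [adjoin_le_iff, Set.insert_subset_iff, Set.singleton_subset_iff]
      exact ⟨add_mem hmem (inv_mem hmem), hmem⟩
    · exact adjoin.mono _ _ _ (by simp)
  have hint : IsIntegral ℚ ζ := (hζ.isIntegral (by omega)).tower_top
  rw [hadj, adjoin.finrank hint, ← cyclotomic_eq_minpoly_rat hζ (by omega), natDegree_cyclotomic]
end

section
/- Let p ≥ 13 be a prime with p ≡ 3 (mod 4), and let G be a finite non-cyclic group of order 12p that contains a normal cyclic subgroup of order 3p and an element of order 12. Then there exist elements x, y ∈ G such that x has order p, y has order 12, y·x·y⁻¹ = x⁻¹, and x and y generate G; that is, G is isomorphic to the semidirect product ℤ_p ⋊₂ ℤ₁₂ = ⟨x, y : xᵖ = y¹² = 1, y·x·y⁻¹ = x⁻¹⟩. -/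
/-!
Write the normal cyclic subgroup as `N = ⟨n⟩`, put `x = n ^ 3` (of order `p`) and let `y` have
order 12. Normality gives `y n y⁻¹ = n ^ k`, hence `y x y⁻¹ = x ^ k`. The index of `N` is 4, so
`y ^ 4 ∈ N` commutes with `x`, and `p ∣ k ^ 4 - 1 = (k - 1) (k + 1) (k ^ 2 + 1)`. As `-1` is not
a square modulo `p ≡ 3 (mod 4)`, either `k ≡ 1` or `k ≡ -1`. In the first case `x` and `y`
commute, so `x * y` has order `12 p` and `G` is cyclic, which is excluded. Generation follows
because `12` and `p` are coprime divisors of the order of `⟨x, y⟩`.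
-/

/-- If conjugation by `y` raises `x` to the power `k`, conjugation by `y ^ m` raises `x` to the
power `k ^ m`. -/
lemma conj_pow_eq_zpow_pow {G : Type*} [Group G] {x y : G} {k : ℤ}
    (h : y * x * y⁻¹ = x ^ k) (m : ℕ) : y ^ m * x * (y ^ m)⁻¹ = x ^ (k ^ m) := by
  induction m with
  | zero => simp
  | succ m ih =>
    calc y ^ (m + 1) * x * (y ^ (m + 1))⁻¹ = y * (y ^ m * x * (y ^ m)⁻¹) * y⁻¹ := by
          rw [pow_succ']; group
      _ = x ^ (k ^ (m + 1)) := by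
          rw [ih, ← conj_zpow, h, ← zpow_mul, pow_succ']

lemma dvd_sub_one_or_dvd_add_one_of_dvd_pow_four_sub_one {p : ℕ} (hp : p.Prime)
    (hp4 : p % 4 = 3) {k : ℤ} (h : (p : ℤ) ∣ k ^ 4 - 1) :
    (p : ℤ) ∣ k - 1 ∨ (p : ℤ) ∣ k + 1 := by
  have : Fact p.Prime := ⟨hp⟩
  have hpi : Prime (p : ℤ) := Nat.prime_iff_prime_int.mp hp
  have hfac : k ^ 4 - 1 = (k - 1) * (k + 1) * (k ^ 2 + 1) := by ring
  rw [hfac] at h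
  rcases hpi.dvd_or_dvd h with h | h
  · exact hpi.dvd_or_dvd h
  · exfalso
    have h0 : ((k ^ 2 + 1 : ℤ) : ZMod p) = 0 := (ZMod.intCast_zmod_eq_zero_iff_dvd _ p).2 h
    push_cast at h0
    exact ZMod.mod_four_ne_three_of_sq_eq_neg_one (eq_neg_of_add_eq_zero_left h0) hp4

/-- For `p ≥ 13` prime with `p ≡ 3 (mod 4)`, a non-cyclic group of order `12p`
with a normal cyclic subgroup of order `3p` and an element of order 12 is
generated by elements `x` of order `p` and `y` of order 12 with
`y * x * y⁻¹ = x⁻¹` (i.e. it is `ℤ_p ⋊₂ ℤ₁₂`). -/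
theorem group_12p_structure (p : ℕ) (hp : p.Prime) (hp13 : 13 ≤ p) (hp4 : p % 4 = 3)
    (G : Type*) [Group G] [Finite G] (hcard : Nat.card G = 12 * p)
    (hnc : ¬ IsCyclic G)
    (hN : ∃ N : Subgroup G, N.Normal ∧ IsCyclic N ∧ Nat.card N = 3 * p)
    (h12 : ∃ g : G, orderOf g = 12) :
    ∃ x y : G, orderOf x = p ∧ orderOf y = 12 ∧ y * x * y⁻¹ = x⁻¹ ∧
      Subgroup.closure {x, y} = ⊤ := by
  obtain ⟨N, hNn, hNc, hNcard⟩ := hN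
  obtain ⟨y, hy⟩ := h12
  obtain ⟨n, rfl⟩ := (Subgroup.isCyclic_iff_exists_zpowers_eq_top N).1 hNc
  have hn : orderOf n = 3 * p := by rw [← Nat.card_zpowers, hNcard]
  have hx : orderOf (n ^ 3) = p := by
    rw [orderOf_pow_of_dvd (by norm_num) (by rw [hn]; exact dvd_mul_right _ _), hn]
    exact Nat.mul_div_cancel_left p (by norm_num)
  have hcop : Nat.Coprime p 12 :=
    (Nat.coprime_primes hp Nat.prime_two |>.2 (by omega)).mul_right
      ((Nat.coprime_primes hp Nat.prime_two |>.2 (by omega)).mul_right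
        (Nat.coprime_primes hp Nat.prime_three |>.2 (by omega)))
  obtain ⟨k, hk⟩ := Subgroup.mem_zpowers_iff.1
    (hNn.conj_mem n (Subgroup.mem_zpowers n) y)
  have hconj : y * n ^ 3 * y⁻¹ = (n ^ 3) ^ k := by
    rw [← conj_pow, ← hk, ← zpow_natCast, ← zpow_natCast, ← zpow_mul, ← zpow_mul, mul_comm]
  have hindex : (Subgroup.zpowers n).index = 4 := by
    have h := (Subgroup.zpowers n).card_mul_index
    rw [hNcard, hcard] at h
    have h3p : 0 < 3 * p := by omega
    apply Nat.eq_of_mul_eq_mul_left h3p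
    rw [h]; ring
  obtain ⟨m, hm⟩ := Subgroup.mem_zpowers_iff.1
    (hindex ▸ (Subgroup.zpowers n).pow_index_mem y)
  have hcomm : Commute (y ^ 4) (n ^ 3) := by
    rw [← hm]
    exact ((Commute.refl n).zpow_left m).pow_right 3
  have hdvd : (p : ℤ) ∣ k ^ 4 - 1 := by
    have h4 := conj_pow_eq_zpow_pow hconj 4
    rw [hcomm.eq, mul_inv_cancel_right] at h4
    rw [← hx, orderOf_dvd_iff_zpow_eq_one, zpow_sub_one, ← h4, mul_inv_cancel]
  refine ⟨n ^ 3, y, hx, hy, ?_, ?_⟩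
  · rcases dvd_sub_one_or_dvd_add_one_of_dvd_pow_four_sub_one hp hp4 hdvd with h | h
    · exfalso
      rw [← hx, orderOf_dvd_iff_zpow_eq_one, zpow_sub_one, mul_inv_eq_one] at h
      rw [h, mul_inv_eq_iff_eq_mul] at hconj
      have hxy : Commute (n ^ 3) y := hconj.symm
      refine hnc (isCyclic_of_orderOf_eq_card (n ^ 3 * y) ?_)
      rw [hxy.orderOf_mul_eq_mul_orderOf_of_coprime (by rwa [hx, hy]), hx, hy, hcard, mul_comm]
    · rw [← hx, orderOf_dvd_iff_zpow_eq_one, zpow_add_one, mul_eq_one_iff_eq_inv] at h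
      rw [hconj, h]
  · have hxm : n ^ 3 ∈ Subgroup.closure {n ^ 3, y} := Subgroup.subset_closure (by simp)
    have hym : y ∈ Subgroup.closure {n ^ 3, y} := Subgroup.subset_closure (by simp)
    have h1 := Subgroup.orderOf_dvd_natCard _ hxm
    have h2 := Subgroup.orderOf_dvd_natCard _ hym
    rw [hx] at h1
    rw [hy] at h2
    apply Subgroup.eq_top_of_le_card
    rw [hcard, mul_comm]
    exact Nat.le_of_dvd Nat.card_pos (hcop.mul_dvd_of_dvd_of_dvd h1 h2)
end

section
/- Every non-cyclic group of order 315 whose Sylow 3-subgroups are cyclic (of order 9) has a normal Sylow 5-subgroup of order 5. -/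
/-!
Since 3 is the smallest prime dividing 315 and the Sylow 3-subgroups are cyclic, Burnside's
transfer theorem gives a normal 3-complement `N`, of order 35. The number of Sylow 5-subgroups
of `N` divides 7 and is 1 modulo 5, so `N` has a unique, hence characteristic, Sylow 5-subgroup.
A characteristic subgroup of a normal subgroup is normal, so its image is normal of order 5 in `G`.
-/

theorem factorization_pow_mul (p k m : ℕ) (hp : p.Prime) (hm : ¬ p ∣ m) (n : ℕ)
    (hn : n = p ^ k * m) : n.factorization p = k := by
  have hm0 : m ≠ 0 := fun h => hm (h ▸ dvd_zero p)
  rw [hn, Nat.factorization_mul (pow_ne_zero k hp.ne_zero) hm0, Finsupp.add_apply,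
    hp.factorization_pow, Finsupp.single_eq_same, Nat.factorization_eq_zero_of_not_dvd hm, add_zero]

/-- A group of order 35 has a characteristic subgroup of order 5. -/
theorem exists_characteristic_card_five {N : Type*} [Group N] (hN : Nat.card N = 35) :
    ∃ Q : Subgroup N, Q.Characteristic ∧ Nat.card Q = 5 := by
  have : Finite N := Nat.finite_of_card_ne_zero (by omega)
  have : Fact (Nat.Prime 5) := ⟨by norm_num⟩
  obtain ⟨Q⟩ : Nonempty (Sylow 5 N) := inferInstance
  have hQ : Nat.card Q = 5 := by
    rw [Q.card_eq_multiplicity, hN,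
      factorization_pow_mul 5 1 7 (by norm_num) (by norm_num) 35 (by norm_num), pow_one]
  have hidx : (Q : Subgroup N).index = 7 := by
    have h := (Q : Subgroup N).card_mul_index
    rw [hN, hQ] at h
    omega
  have hdvd : Nat.card (Sylow 5 N) ∣ 7 := hidx ▸ Q.card_dvd_index
  have hmod : Nat.card (Sylow 5 N) % 5 = 1 := card_sylow_modEq_one 5 N
  have hone : Nat.card (Sylow 5 N) = 1 := by
    rcases (Nat.dvd_prime (by norm_num)).mp hdvd with h | h
    · exact h
    · omega
  have : Subsingleton (Sylow 5 N) := (Nat.card_eq_one_iff_unique.mp hone).1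
  exact ⟨Q, Q.characteristic_of_subsingleton, hQ⟩

/-- Every non-cyclic group of order 315 whose Sylow 3-subgroups are cyclic has a
normal Sylow 5-subgroup of order 5. -/
theorem group_315_normal_sylow5 (G : Type*) [Group G] [Finite G]
    (hcard : Nat.card G = 315) (hnc : ¬ IsCyclic G)
    (hsyl : ∀ P : Sylow 3 G, IsCyclic (P : Subgroup G)) :
    ∃ P : Sylow 5 G, (P : Subgroup G).Normal ∧ Nat.card (P : Subgroup G) = 5 := by
  have : Fact (Nat.Prime 3) := ⟨by norm_num⟩
  have : Fact (Nat.Prime 5) := ⟨by norm_num⟩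
  have hfac3 : (315 : ℕ).factorization 3 = 2 :=
    factorization_pow_mul 3 2 35 (by norm_num) (by norm_num) 315 (by norm_num)
  have hfac5 : (315 : ℕ).factorization 5 = 1 :=
    factorization_pow_mul 5 1 63 (by norm_num) (by norm_num) 315 (by norm_num)
  obtain ⟨S⟩ : Nonempty (Sylow 3 G) := inferInstance
  have hS : Nat.card S = 9 := by
    rw [S.card_eq_multiplicity, hcard, hfac3]; rfl
  have hmin : (Nat.card G).minFac = 3 := by rw [hcard]; norm_num
  have hcompl := IsCyclic.isComplement' hmin (hsyl S)
  set N := (MonoidHom.transferSylow S (IsCyclic.normalizer_le_centralizer hmin (hsyl S))).ker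
    with hNdef
  have hN : Nat.card N = 35 := by
    have h := hcompl.card_mul_card
    rw [hcard, hS] at h
    omega
  obtain ⟨Q, hQchar, hQ⟩ := exists_characteristic_card_five hN
  have hQ' : Nat.card (Q.map N.subtype) = 5 := by
    rw [Subgroup.card_map_of_injective N.subtype_injective, hQ]
  refine ⟨Sylow.ofCard (Q.map N.subtype) (by rw [hQ', hcard, hfac5]; rfl), ?_, hQ'⟩
  have : N.Normal := by rw [hNdef]; infer_instance
  exact ConjAct.normal_of_characteristic_of_normal
end
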